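/- arXiv:1908.06287 — 3 statements merged into one kernel-verified Lean document; each statement's English description precedes it below -/
import Mathlib

section
/- Strong duality (Lemma 1): let n, d ≥ 1, x_1, …, x_n ∈ ℝ^d, ξ > 0. Suppose each ℓ_i : ℝ → ℝ is convex (hence continuous, being finite-valued on ℝ), and r : ℝ^d → ℝ is ζ-strongly convex for some ζ > 0 (i.e., r(x+Δx) ≥ r(x) + ⟪g, Δx⟫ + (ζ/2)‖Δx‖² for every subgradient g of r at x) and lower semicontinuous. Define, with values in the extended reals, ℓ_i^*(y) = sup_{u∈ℝ}(y·u − ℓ_i(u)) and r^*(z) = sup_{s∈ℝ^d}(⟪s, z⟫ − r(s)), and set D(a) = −(1/n)·Σ_{i=1}^n ℓ_i^*(−a_i) − ξ·r^*(v(a)) with v(a) = (1/(ξn))·Σ_{i=1}^n a_i x_i. Then the primal infimum inf_{w∈ℝ^d} P(w), with P(w) = (1/n)·Σ_{i=1}^n ℓ_i(⟪x_i, w⟫) + ξ·r(w), is attained and equals the dual supremum sup_{a∈ℝ^n} D(a), i.e., min_w P(w) = sup_a D(a). -/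
open scoped RealInnerProductSpace BigOperators

/-!
Minimizing sequences of a strongly convex function are Cauchy, so the primal objective attains its
minimum. Introduce the predictions `uᵢ = ⟪xᵢ, w⟫` as independent variables tied to `w` by linear
constraints: since conjugates are suprema over independent variables, `D(a)` is the infimum over
`(u, w)` of the Lagrangian with multipliers `aᵢ/n`. Weak duality evaluates the Lagrangian at a
feasible point. Conversely, the losses are finite and continuous everywhere, so Hahn-Banach
supports the value function of the perturbed constraints by a nonvertical hyperplane at `0`, whose
slope gives multipliers `a` with `D(a) ≥ min P`.
-/

open Filter Topology

section StronglyConvexMinimization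

variable {E : Type*} [NormedAddCommGroup E] [NormedSpace ℝ E] {s : Set E} {f : E → ℝ} {m : ℝ}

theorem strongConvexOn_const_mul {c : ℝ} (hc : 0 ≤ c) (hf : StrongConvexOn s m f) :
    StrongConvexOn s (c * m) fun w => c * f w := by
  refine ⟨hf.1, fun w hw w' hw' a b ha hb hab => ?_⟩
  have h := mul_le_mul_of_nonneg_left (hf.2 hw hw' ha hb hab) hc
  simp only [smul_eq_mul] at h ⊢
  linarith

theorem strongConvexOn_add_of_convexOn {g : E → ℝ} (hg : ConvexOn ℝ s g)
    (hf : StrongConvexOn s m f) : StrongConvexOn s m (g + f) := by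
  simpa [StrongConvexOn] using hg.uniformConvexOn_zero.add hf

theorem strongConvexOn_midpoint_le (hf : StrongConvexOn s m f) {w w' : E} (hw : w ∈ s)
    (hw' : w' ∈ s) :
    f (midpoint ℝ w w') ≤ (f w + f w') / 2 - m / 8 * ‖w - w'‖ ^ 2 := by
  have h := hf.2 hw hw' one_half_pos.le one_half_pos.le (add_halves (1 : ℝ))
  rw [midpoint_eq_smul_add, invOf_eq_inv, smul_add, ← one_div]
  simp only [smul_eq_mul] at h
  linarith

theorem bddBelow_range_of_strongConvexOn (hf : StrongConvexOn Set.univ m f) (hm : 0 < m)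
    (hlsc : LowerSemicontinuous f) : BddBelow (Set.range f) := by
  obtain ⟨φ, c, hφ, -⟩ := ConvexOn.exists_affine_le_of_lt (𝕜 := ℝ) (Set.mem_univ (0 : E))
    (sub_one_lt (f 0)) isClosed_univ (lowerSemicontinuousOn_univ_iff.2 hlsc)
    (hf.strictConvexOn hm).convexOn
  have affine_le (w : E) : φ w + c ≤ f w := by simpa using hφ ⟨w, trivial⟩
  refine ⟨2 * c - f 0 - ‖φ‖ ^ 2 / m, ?_⟩
  rintro _ ⟨w, rfl⟩
  have hmid : φ w / 2 + c ≤ (f w + f 0) / 2 - m / 8 * ‖w‖ ^ 2 := by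
    calc φ w / 2 + c = φ (midpoint ℝ w 0) + c := by
          simp [midpoint_eq_smul_add, div_eq_inv_mul]
      _ ≤ f (midpoint ℝ w 0) := affine_le _
      _ ≤ (f w + f 0) / 2 - m / 8 * ‖w‖ ^ 2 := by
          simpa using strongConvexOn_midpoint_le hf (Set.mem_univ w) (Set.mem_univ 0)
  have hφw : -(‖φ‖ * ‖w‖) ≤ φ w := neg_le_of_abs_le (φ.le_opNorm w)
  have hsq : ‖φ‖ * ‖w‖ ≤ ‖φ‖ ^ 2 / m + m / 4 * ‖w‖ ^ 2 := by
    have : ‖φ‖ ^ 2 / m + m / 4 * ‖w‖ ^ 2 - ‖φ‖ * ‖w‖ = (‖φ‖ - m / 2 * ‖w‖) ^ 2 / m := by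
      field_simp
      ring
    linarith [show 0 ≤ (‖φ‖ - m / 2 * ‖w‖) ^ 2 / m by positivity]
  linarith

theorem exists_forall_le_of_strongConvexOn [CompleteSpace E] (hf : StrongConvexOn Set.univ m f)
    (hm : 0 < m) (hlsc : LowerSemicontinuous f) : ∃ w₀, ∀ w, f w₀ ≤ f w := by
  have hbdd := bddBelow_range_of_strongConvexOn hf hm hlsc
  set B := sInf (Set.range f)
  have hB (w : E) : B ≤ f w := csInf_le hbdd ⟨w, rfl⟩
  obtain ⟨v, hv_anti, hv_lim, hv⟩ := exists_seq_tendsto_sInf (Set.range_nonempty f) hbdd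
  choose w hw using hv
  have hdist (i j k : ℕ) (hi : k ≤ i) (hj : k ≤ j) :
      dist (w i) (w j) ≤ √(8 / m * (v k - B)) := by
    rw [dist_eq_norm]
    refine Real.le_sqrt_of_sq_le ?_
    have hmid := strongConvexOn_midpoint_le hf (Set.mem_univ (w i)) (Set.mem_univ (w j))
    rw [div_mul_eq_mul_div, le_div_iff₀ hm]
    linarith [hB (midpoint ℝ (w i) (w j)), hw i, hw j, hv_anti hi, hv_anti hj]
  have hradius : Tendsto (fun k => √(8 / m * (v k - B))) atTop (𝓝 0) := by
    simpa [B] using ((hv_lim.sub_const B).const_mul (8 / m)).sqrt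
  obtain ⟨w₀, hw₀⟩ := cauchySeq_tendsto_of_complete (cauchySeq_of_le_tendsto_0 _ hdist hradius)
  have hmin : f w₀ ≤ B := by
    refine le_of_forall_lt_imp_le_of_dense fun y hy => ge_of_tendsto hv_lim ?_
    filter_upwards [hw₀.eventually (hlsc w₀ y hy)] with k hk
    exact (hw k ▸ hk).le
  exact ⟨w₀, fun u => hmin.trans (hB u)⟩

end StronglyConvexMinimization

section LagrangeMultiplier

variable {E F : Type*} [AddCommGroup E] [Module ℝ E] [AddCommGroup F] [Module ℝ F]
  {f : E → ℝ} {g : F → ℝ}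

/-- The strict epigraph of the value function `p ↦ inf_w f w + g (A w + p)` of the minimization of
`f + g ∘ A` with the argument of `g` perturbed by `p`. -/
def valueEpigraph (f : E → ℝ) (g : F → ℝ) (A : E →ₗ[ℝ] F) : Set (F × ℝ) :=
  {z | ∃ w, f w + g (A w + z.1) < z.2}

theorem convex_valueEpigraph (hf : ConvexOn ℝ Set.univ f) (hg : ConvexOn ℝ Set.univ g)
    (A : E →ₗ[ℝ] F) : Convex ℝ (valueEpigraph f g A) := by
  have hjoint : ConvexOn ℝ Set.univ fun q : E × F => f q.1 + g (A q.1 + q.2) :=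
    (hf.comp_linearMap (LinearMap.fst ℝ E F)).add (hg.comp_linearMap (A.coprod LinearMap.id))
  have himage : valueEpigraph f g A = (LinearMap.snd ℝ E F).prodMap (LinearMap.id : ℝ →ₗ[ℝ] ℝ) ''
      {q | q.1 ∈ Set.univ ∧ f q.1.1 + g (A q.1.1 + q.1.2) < q.2} := by
    ext ⟨p, t⟩
    simp [valueEpigraph]
  exact himage ▸ hjoint.convex_strict_epigraph.linear_image _

variable [TopologicalSpace F]

theorem isOpen_valueEpigraph [ContinuousAdd F] (hg : Continuous g) (A : E →ₗ[ℝ] F) :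
    IsOpen (valueEpigraph f g A) := by
  simp only [valueEpigraph, Set.ofPred_exists]
  exact isOpen_iUnion fun w => isOpen_lt (by fun_prop) continuous_snd

theorem exists_lagrange_multiplier [IsTopologicalAddGroup F] [ContinuousSMul ℝ F]
    (hf : ConvexOn ℝ Set.univ f) (hg : ConvexOn ℝ Set.univ g) (hg_cont : Continuous g)
    (A : E →ₗ[ℝ] F) {c : ℝ} (hc : ∀ w, c ≤ f w + g (A w)) :
    ∃ φ : StrongDual ℝ F, ∀ w u, c ≤ f w + g u + φ (u - A w) := by
  have hnotMem : ((0 : F), c) ∉ valueEpigraph f g A := by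
    rintro ⟨w, hw⟩
    exact hw.not_ge (by simpa using hc w)
  obtain ⟨ψ, hψ⟩ := geometric_hahn_banach_point_open (convex_valueEpigraph hf hg A)
    (isOpen_valueEpigraph hg_cont A) hnotMem
  set γ := ψ (0, 1)
  have hψ_apply (p : F) (t : ℝ) : ψ (p, t) = ψ (p, 0) + γ * t := by
    rw [mul_comm, ← smul_eq_mul, ← map_smul, ← map_add]
    simp
  have hγ_mul (w : E) (p : F) {t : ℝ} (ht : f w + g (A w + p) < t) :
      γ * c < ψ (p, 0) + γ * t := by
    have h := hψ (p, t) ⟨w, ht⟩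
    rwa [hψ_apply, hψ_apply p, Prod.mk_zero_zero, map_zero, zero_add] at h
  have hγ : 0 < γ := by
    have h := hγ_mul 0 0 (lt_add_one _)
    rw [add_zero, Prod.mk_zero_zero, map_zero ψ, zero_add] at h
    have hmul : 0 < γ * (f 0 + g (A 0) + 1 - c) := by linarith
    exact (pos_iff_pos_of_mul_pos hmul).2 (by linarith [hc 0])
  refine ⟨γ⁻¹ • ψ.comp (.inl ℝ F ℝ), fun w u => le_of_forall_pos_lt_add fun ε hε => ?_⟩
  have h := hγ_mul w (u - A w) (t := f w + g u + ε) (by simpa using hε)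
  have hdiv : c < γ⁻¹ * ψ (u - A w, 0) + (f w + g u + ε) := by
    rwa [← mul_lt_mul_iff_right₀ hγ, mul_add, mul_inv_cancel_left₀ hγ.ne']
  simp only [smul_apply, ContinuousLinearMap.comp_apply, ContinuousLinearMap.inl_apply, smul_eq_mul]
  linarith

end LagrangeMultiplier

section ExtendedRealSuprema

variable {α β ι : Type*}

theorem ereal_neg_iSup (f : α → EReal) : -(⨆ i, f i) = ⨅ i, -f i :=
  EReal.negOrderIso.map_iSup f

theorem ereal_coe_mul_iSup {c : ℝ} (hc : 0 < c) (f : α → EReal) :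
    (c : EReal) * ⨆ i, f i = ⨆ i, (c : EReal) * f i := by
  refine eq_of_forall_ge_iff fun b => ?_
  simp only [mul_comm (c : EReal), iSup_le_iff,
    ← EReal.le_div_iff_mul_le (EReal.coe_pos.2 hc) (EReal.coe_ne_top c)]

theorem iSup_coe_ne_bot [Nonempty α] (f : α → ℝ) : (⨆ i, (f i : EReal)) ≠ ⊥ := by
  simp [iSup_eq_bot]

theorem iSup_coe_add_iSup_coe (f : α → ℝ) (g : β → ℝ) :
    (⨆ i, (f i : EReal)) + ⨆ j, (g j : EReal) = ⨆ p : α × β, ((f p.1 + g p.2 : ℝ) : EReal) := by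
  refine le_antisymm (EReal.add_le_of_forall_lt fun b hb c hc => ?_)
    (iSup_le fun p => add_le_add (le_iSup (fun i => (f i : EReal)) p.1)
      (le_iSup (fun j => (g j : EReal)) p.2))
  obtain ⟨i, hi⟩ := lt_iSup_iff.1 hb
  obtain ⟨j, hj⟩ := lt_iSup_iff.1 hc
  exact (add_le_add hi.le hj.le).trans
    (le_iSup (fun p : α × β => ((f p.1 + g p.2 : ℝ) : EReal)) (i, j))

theorem sum_iSup_coe [Nonempty α] (s : Finset ι) (f : ι → α → ℝ) :
    ∑ i ∈ s, ⨆ t, (f i t : EReal) = ⨆ u : ι → α, ((∑ i ∈ s, f i (u i) : ℝ) : EReal) := by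
  classical
  induction s using Finset.induction_on with
  | empty => simp
  | insert j s hj ih =>
    rw [Finset.sum_insert hj, ih, iSup_coe_add_iSup_coe]
    simp only [Finset.sum_insert hj]
    refine le_antisymm (iSup_le fun ⟨t, u⟩ => ?_) (iSup_le fun u => le_iSup_of_le (u j, u) le_rfl)
    refine le_iSup_of_le (Function.update u j t) (le_of_eq ?_)
    rw [Function.update_self, Finset.sum_congr rfl fun i hi => ?_]
    rw [Function.update_of_ne (ne_of_mem_of_not_mem hi hj)]

theorem neg_iSup_coe_sub_iSup_coe [Nonempty α] [Nonempty β] (f : α → ℝ) (g : β → ℝ) :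
    -(⨆ i, (f i : EReal)) - ⨆ j, (g j : EReal) =
      ⨅ p : α × β, ((-(f p.1 + g p.2) : ℝ) : EReal) := by
  rw [← EReal.neg_add (.inl (iSup_coe_ne_bot f)) (.inr (iSup_coe_ne_bot g)),
    iSup_coe_add_iSup_coe, ereal_neg_iSup]
  simp only [EReal.coe_neg]

end ExtendedRealSuprema

section EmpiricalRisk

variable {E ι : Type*} [NormedAddCommGroup E] [InnerProductSpace ℝ E]

/-- The Fenchel conjugate `f^*(z) = sup_s (⟪s, z⟫ - f s)`, with values in the extended reals. On `ℝ`
the inner product `⟪u, y⟫` is `y * u`, so this also covers the conjugates of the losses. -/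
noncomputable def fenchelConjugate (f : E → ℝ) (z : E) : EReal :=
  ⨆ s, ((⟪s, z⟫ - f s : ℝ) : EReal)

/-- The linear map `w ↦ (⟪xᵢ, w⟫)ᵢ` sending a weight vector to its predictions on the data. -/
noncomputable def predictions (x : ι → E) : E →L[ℝ] ι → ℝ :=
  .pi fun i => innerSL ℝ (x i)

theorem predictions_apply (x : ι → E) (w : E) (i : ι) : predictions x w i = ⟪x i, w⟫ :=
  rfl

variable [Fintype ι]

/-- The mean `(1/n) ∑ᵢ ℓᵢ(uᵢ)` of the losses, as a function of the vector `u` of predictions. -/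
noncomputable def meanLoss (ℓ : ι → ℝ → ℝ) (u : ι → ℝ) : ℝ :=
  1 / (Fintype.card ι : ℝ) * ∑ i, ℓ i (u i)

/-- The vector `v(a) = (1/(ξn)) ∑ᵢ aᵢ xᵢ` at which the dual objective evaluates `r^*`. -/
noncomputable def dualVector (x : ι → E) (ξ : ℝ) (a : ι → ℝ) : E :=
  (1 / (ξ * Fintype.card ι)) • ∑ i, a i • x i

/-- The primal objective `P(w)` of regularized empirical risk minimization. -/
noncomputable def ermPrimal (x : ι → E) (ℓ : ι → ℝ → ℝ) (r : E → ℝ) (ξ : ℝ) (w : E) : ℝ :=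
  meanLoss ℓ (predictions x w) + ξ * r w

/-- The dual objective `D(a)` of regularized empirical risk minimization. -/
noncomputable def ermDual (x : ι → E) (ℓ : ι → ℝ → ℝ) (r : E → ℝ) (ξ : ℝ) (a : ι → ℝ) : EReal :=
  -((1 / (Fintype.card ι : ℝ) : EReal) * ∑ i, fenchelConjugate (ℓ i) (-a i)) -
    (ξ : EReal) * fenchelConjugate r (dualVector x ξ a)

/-- The Lagrangian of the problem of minimizing `(1/n) ∑ᵢ ℓᵢ(uᵢ) + ξ r(w)` subject to
`uᵢ = ⟪xᵢ, w⟫`, with multiplier `aᵢ/n` for the `i`-th constraint. -/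
noncomputable def ermLagrangian (x : ι → E) (ℓ : ι → ℝ → ℝ) (r : E → ℝ) (ξ : ℝ) (a u : ι → ℝ)
    (w : E) : ℝ :=
  meanLoss ℓ u + ξ * r w + 1 / (Fintype.card ι : ℝ) * ∑ i, a i * (u i - ⟪x i, w⟫)

variable {x : ι → E} {ℓ : ι → ℝ → ℝ} {r : E → ℝ} {ξ : ℝ}

theorem convexOn_meanLoss (hℓ : ∀ i, ConvexOn ℝ Set.univ (ℓ i)) :
    ConvexOn ℝ Set.univ (meanLoss ℓ) := by
  have hsum : ConvexOn ℝ Set.univ (∑ i, fun u : ι → ℝ => ℓ i (u i)) :=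
    Finset.sum_induction _ (ConvexOn ℝ Set.univ) (fun _ _ => ConvexOn.add)
      (convexOn_const 0 convex_univ) fun i _ =>
        (hℓ i).comp_linearMap (LinearMap.proj (R := ℝ) (φ := fun _ : ι => ℝ) i)
  have hmean : meanLoss ℓ =
      fun u => (1 / (Fintype.card ι : ℝ)) • (∑ i, fun u : ι → ℝ => ℓ i (u i)) u := by
    ext u
    simp [meanLoss]
  exact hmean ▸ hsum.smul (by positivity)

theorem continuous_meanLoss (hℓ : ∀ i, Continuous (ℓ i)) : Continuous (meanLoss ℓ) :=
  continuous_const.mul (continuous_finsetSum _ fun i _ => (hℓ i).comp (continuous_apply i))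

theorem mul_inner_dualVector (hξ : ξ ≠ 0) (a : ι → ℝ) (w : E) :
    ξ * ⟪w, dualVector x ξ a⟫ = 1 / (Fintype.card ι : ℝ) * ∑ i, a i * ⟪x i, w⟫ := by
  simp only [dualVector, inner_smul_right, inner_sum, real_inner_comm w]
  rw [one_div, mul_inv, mul_assoc, mul_inv_cancel_left₀ hξ, one_div]

theorem ermLagrangian_predictions (a : ι → ℝ) (w : E) :
    ermLagrangian x ℓ r ξ a (predictions x w) w = ermPrimal x ℓ r ξ w := by
  simp [ermLagrangian, ermPrimal, predictions_apply]

theorem ermDual_eq_iInf_ermLagrangian [Nonempty ι] (hξ : 0 < ξ) (a : ι → ℝ) :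
    ermDual x ℓ r ξ a = ⨅ p : (ι → ℝ) × E, (ermLagrangian x ℓ r ξ a p.1 p.2 : EReal) := by
  have hcard : 0 < 1 / (Fintype.card ι : ℝ) := by positivity
  simp only [ermDual, fenchelConjugate, sum_iSup_coe, ← EReal.coe_one, ← EReal.coe_div,
    ereal_coe_mul_iSup hcard, ereal_coe_mul_iSup hξ, ← EReal.coe_mul, neg_iSup_coe_sub_iSup_coe]
  refine iInf_congr fun ⟨u, w⟩ => congrArg _ ?_
  have hlinear : ξ * (⟪w, dualVector x ξ a⟫ - r w) =
      1 / (Fintype.card ι : ℝ) * ∑ i, a i * ⟪x i, w⟫ - ξ * r w := by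
    rw [mul_sub, mul_inner_dualVector hξ.ne']
  have hlosses : ∑ i, (⟪u i, -a i⟫ - ℓ i (u i)) = -∑ i, a i * u i - ∑ i, ℓ i (u i) := by
    simp [Finset.sum_sub_distrib]
  rw [hlinear, hlosses]
  simp only [ermLagrangian, meanLoss, mul_sub, Finset.sum_sub_distrib]
  ring

theorem ermDual_le_ermPrimal [Nonempty ι] (hξ : 0 < ξ) (a : ι → ℝ) (w : E) :
    ermDual x ℓ r ξ a ≤ ermPrimal x ℓ r ξ w := by
  rw [ermDual_eq_iInf_ermLagrangian hξ, ← ermLagrangian_predictions a w]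
  exact iInf_le (fun p : (ι → ℝ) × E => (ermLagrangian x ℓ r ξ a p.1 p.2 : EReal))
    (predictions x w, w)

theorem exists_le_ermDual_of_forall_le_ermPrimal [Nonempty ι] (hℓ : ∀ i, ConvexOn ℝ Set.univ (ℓ i))
    (hr : ConvexOn ℝ Set.univ r) (hξ : 0 < ξ) {c : ℝ} (hc : ∀ w, c ≤ ermPrimal x ℓ r ξ w) :
    ∃ a, (c : EReal) ≤ ermDual x ℓ r ξ a := by
  classical
  obtain ⟨φ, hφ⟩ := exists_lagrange_multiplier (hr.smul hξ.le) (convexOn_meanLoss hℓ)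
    (continuous_meanLoss fun i => (hℓ i).locallyLipschitz.continuous) (predictions x).toLinearMap
    (c := c) fun w => (hc w).trans_eq (add_comm _ _)
  refine ⟨fun i => Fintype.card ι * φ fun j => if i = j then 1 else 0, ?_⟩
  rw [ermDual_eq_iInf_ermLagrangian hξ]
  refine le_iInf fun ⟨u, w⟩ => EReal.coe_le_coe_iff.2 ((hφ w u).trans_eq ?_)
  have hφ_apply : φ (u - predictions x w) =
      ∑ i, (u i - ⟪x i, w⟫) * φ fun j => if i = j then 1 else 0 :=
    φ.toLinearMap.pi_apply_eq_sum_univ _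
  have hscale : 1 / (Fintype.card ι : ℝ) * ∑ i,
      Fintype.card ι * (φ fun j => if i = j then 1 else 0) * (u i - ⟪x i, w⟫) =
        φ (u - predictions x w) := by
    rw [hφ_apply, Finset.mul_sum]
    exact Finset.sum_congr rfl fun i _ => by field_simp
  rw [ermLagrangian, hscale, add_comm (meanLoss ℓ u)]
  rfl

theorem exists_forall_ermPrimal_le [CompleteSpace E] (hℓ : ∀ i, ConvexOn ℝ Set.univ (ℓ i))
    {ζ : ℝ} (hζ : 0 < ζ) (hr : StrongConvexOn Set.univ ζ r) (hr_lsc : LowerSemicontinuous r)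
    (hξ : 0 < ξ) : ∃ w₀, ∀ w, ermPrimal x ℓ r ξ w₀ ≤ ermPrimal x ℓ r ξ w := by
  have hloss_cont : Continuous fun w => meanLoss ℓ (predictions x w) :=
    (continuous_meanLoss fun i => (hℓ i).locallyLipschitz.continuous).comp
      (predictions x).continuous
  have hstrong : StrongConvexOn Set.univ (ξ * ζ) (ermPrimal x ℓ r ξ) :=
    strongConvexOn_add_of_convexOn
      ((convexOn_meanLoss hℓ).comp_linearMap (predictions x).toLinearMap)
      (strongConvexOn_const_mul hξ.le hr)
  have hlsc : LowerSemicontinuous (ermPrimal x ℓ r ξ) :=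
    hloss_cont.lowerSemicontinuous.add
      ((continuous_const_mul ξ).comp_lowerSemicontinuous hr_lsc (monotone_mul_left_of_nonneg hξ.le))
  exact exists_forall_le_of_strongConvexOn hstrong (mul_pos hξ hζ) hlsc

theorem strong_duality_ERM_general [CompleteSpace E] [Nonempty ι] (x : ι → E)
    (hℓ : ∀ i, ConvexOn ℝ Set.univ (ℓ i)) {ζ : ℝ} (hζ : 0 < ζ) (hr : StrongConvexOn Set.univ ζ r)
    (hr_lsc : LowerSemicontinuous r) (hξ : 0 < ξ) :
    ∃ w₀, (∀ w, ermPrimal x ℓ r ξ w₀ ≤ ermPrimal x ℓ r ξ w) ∧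
      (ermPrimal x ℓ r ξ w₀ : EReal) = ⨆ a, ermDual x ℓ r ξ a := by
  obtain ⟨w₀, hw₀⟩ := exists_forall_ermPrimal_le (x := x) hℓ hζ hr hr_lsc hξ
  obtain ⟨a, ha⟩ :=
    exists_le_ermDual_of_forall_le_ermPrimal hℓ (hr.strictConvexOn hζ).convexOn hξ hw₀
  exact ⟨w₀, hw₀, le_antisymm (le_iSup_of_le a ha) (iSup_le fun b => ermDual_le_ermPrimal hξ b w₀)⟩

end EmpiricalRisk

/-- Strong duality (Lemma 1): for convex finite-valued losses `ℓ i` and a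
`ζ`-strongly convex, lower semicontinuous regularizer `r`, the primal infimum of
`P(w) = (1/n) ∑ᵢ ℓᵢ(⟪xᵢ, w⟫) + ξ r(w)` is attained and equals the supremum of the
dual objective `D(a) = -(1/n) ∑ᵢ ℓᵢ^*(-aᵢ) - ξ r^*(v(a))`, with conjugates taking
values in the extended reals and `v(a) = (1/(ξ n)) ∑ᵢ aᵢ xᵢ`. -/
theorem strong_duality_ERM
    (n d : ℕ) (hn : 1 ≤ n) (hd : 1 ≤ d)
    (x : Fin n → EuclideanSpace ℝ (Fin d))
    (ℓ : Fin n → ℝ → ℝ) (hℓ : ∀ i : Fin n, ConvexOn ℝ Set.univ (ℓ i))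
    (r : EuclideanSpace ℝ (Fin d) → ℝ) (ζ : ℝ) (hζ : 0 < ζ)
    (hstrong : StrongConvexOn Set.univ ζ r) (hlsc : LowerSemicontinuous r)
    (ξ : ℝ) (hξ : 0 < ξ) :
    ∃ w₀ : EuclideanSpace ℝ (Fin d),
      (∀ w : EuclideanSpace ℝ (Fin d),
        (1 / (n : ℝ)) * ∑ i : Fin n, ℓ i ⟪x i, w₀⟫ + ξ * r w₀
          ≤ (1 / (n : ℝ)) * ∑ i : Fin n, ℓ i ⟪x i, w⟫ + ξ * r w) ∧
      (((1 / (n : ℝ)) * ∑ i : Fin n, ℓ i ⟪x i, w₀⟫ + ξ * r w₀ : ℝ) : EReal)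
        = ⨆ a : Fin n → ℝ,
            (-(((1 / (n : ℝ)) : EReal) *
                ∑ i : Fin n, ⨆ u : ℝ, (((-(a i)) * u - ℓ i u : ℝ) : EReal))
              - ((ξ : ℝ) : EReal) *
                ⨆ s : EuclideanSpace ℝ (Fin d),
                  ((⟪s, ((1 / (ξ * n)) • ∑ i : Fin n, a i • x i :
                      EuclideanSpace ℝ (Fin d))⟫ - r s : ℝ) : EReal)) := by
  have : Nonempty (Fin n) := ⟨⟨0, hn⟩⟩
  simpa only [ermPrimal, ermDual, meanLoss, predictions_apply, dualVector, fenchelConjugate,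
    Fintype.card_fin, RCLike.inner_apply, conj_trivial] using
      strong_duality_ERM_general x hℓ hζ hstrong hlsc hξ
end

section
/- Block-separable lower bound on the dual objective (equation (15)): let n, d, K ≥ 1, x_1, …, x_n ∈ ℝ^d, ξ > 0, κ > 0, and let D_1, …, D_K be a partition of {1, …, n}. Let ℓ_i^* : ℝ → ℝ for each i, and let r^* : ℝ^d → ℝ be differentiable and κ-compatible: for all v ∈ ℝ^d and Δa ∈ ℝ^n, r^*(v + u(Δa)) ≤ r^*(v) + ⟪∇r^*(v), u(Δa)⟫ + (κ/(2(ξn)²))·Σ_{k=1}^K ‖Σ_{i∈D_k} Δa_i x_i‖², where u(Δa) = (1/(ξn))·Σ_{i=1}^n Δa_i x_i. Define D(a) = −(1/n)·Σ_{i=1}^n ℓ_i^*(−a_i) − ξ·r^*(v(a)) with v(a) = (1/(ξn))·Σ_{i=1}^n a_i x_i, and define the local objectives ΔD_k(Δa_{[k]}; v, a_{[k]}) = −R_k(a_{[k]} + Δa_{[k]}) − (ξ/K)·r^*(v) − ⟪(1/n)·Σ_{i∈D_k} Δa_i x_i, ∇r^*(v)⟫ − (κ/(2ξn²))·‖Σ_{i∈D_k}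 Δa_i x_i‖², where R_k(a_{[k]}) = (1/n)·Σ_{i∈D_k} ℓ_i^*(−a_i). Then for all ā, Δa ∈ ℝ^n: D(ā + Δa) ≥ Σ_{k=1}^K ΔD_k(Δa_{[k]}; v(ā), ā_{[k]}). -/
open scoped RealInnerProductSpace BigOperators

/-!
Since `a ↦ v(a)` is linear, `v(ā + Δa) = v(ā) + u(Δa)`, and compatibility at `v(ā)`, multiplied by
`ξ`, bounds `ξ r^*(v(ā + Δa))` above by a constant, a linear and a block-quadratic term in `Δa`.
Each of these splits over the blocks, as do the losses; the constant `ξ r^*(v(ā))` is shared equally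
among the `K` blocks.
-/

theorem sum_sum_of_existsUnique_mem {ι β M : Type*} [Fintype ι] [Fintype β] [AddCommMonoid M]
    {B : β → Finset ι} (hB : ∀ i, ∃! k, i ∈ B k) (f : ι → M) :
    ∑ k, ∑ i ∈ B k, f i = ∑ i, f i := by
  classical
  calc ∑ k, ∑ i ∈ B k, f i = ∑ i, ∑ k with i ∈ B k, f i := Finset.sum_comm' (by simp)
    _ = ∑ i, f i := by
      simp only [Finset.sum_const, (Fintype.existsUnique_iff_card_one _).mp (hB _), one_smul]

section BlockSeparable

variable {ι β E : Type*} [Fintype ι] [Fintype β] [NormedAddCommGroup E] [InnerProductSpace ℝ E]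

/-- The primal vector `v(a)` attached to the dual variables `a`. As it is linear in `a`, it is also
the displacement `u(Δa)`. -/
noncomputable def primalVector (ξ : ℝ) (x : ι → E) (a : ι → ℝ) : E :=
  (1 / (ξ * Fintype.card ι)) • ∑ i, a i • x i

/-- The dual objective `D(a)`, with `ℓ i` and `r` the conjugates of the losses and of the
regularizer. -/
noncomputable def dualObjective (ξ : ℝ) (x : ι → E) (ℓ : ι → ℝ → ℝ) (r : E → ℝ)
    (a : ι → ℝ) : ℝ :=
  -(1 / (Fintype.card ι : ℝ)) * ∑ i, ℓ i (-a i) - ξ * r (primalVector ξ x a)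

/-- The local objective `ΔD_k` of the block `B k`, with `K` the cardinality of `β` and with `g` in the
role of the gradient of `r` at `v`. The restrictions `a_{[k]}` and
`Δa_{[k]}` are encoded by summing over `B k` only. -/
noncomputable def localDualObjective (ξ κ : ℝ) (x : ι → E) (B : β → Finset ι) (ℓ : ι → ℝ → ℝ)
    (r : E → ℝ) (v g : E) (a Δa : ι → ℝ) (k : β) : ℝ :=
  -((1 / (Fintype.card ι : ℝ)) * ∑ i ∈ B k, ℓ i (-(a i + Δa i)))
    - ξ / (Fintype.card β : ℝ) * r v
    - ⟪(1 / (Fintype.card ι : ℝ)) • ∑ i ∈ B k, Δa i • x i, g⟫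
    - κ / (2 * ξ * (Fintype.card ι : ℝ) ^ 2) * ‖∑ i ∈ B k, Δa i • x i‖ ^ 2

/-- `κ`-compatibility of `r` with the blocks `B` at the single point `v`, with `g` in the role of
the gradient of `r` at `v`. -/
def BlockCompatibleAt (ξ κ : ℝ) (x : ι → E) (B : β → Finset ι) (r : E → ℝ) (v g : E) : Prop :=
  ∀ Δa : ι → ℝ, r (v + primalVector ξ x Δa) ≤ r v + ⟪g, primalVector ξ x Δa⟫
    + κ / (2 * (ξ * Fintype.card ι) ^ 2) * ∑ k, ‖∑ i ∈ B k, Δa i • x i‖ ^ 2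

theorem primalVector_add (ξ : ℝ) (x : ι → E) (a b : ι → ℝ) :
    primalVector ξ x (a + b) = primalVector ξ x a + primalVector ξ x b := by
  simp only [primalVector, Pi.add_apply, add_smul, Finset.sum_add_distrib, smul_add]

theorem smul_primalVector {ξ : ℝ} (hξ : ξ ≠ 0) (x : ι → E) (a : ι → ℝ) :
    ξ • primalVector ξ x a = (1 / (Fintype.card ι : ℝ)) • ∑ i, a i • x i := by
  rw [primalVector, smul_smul, mul_one_div, div_mul_cancel_left₀ hξ, one_div]

theorem sum_localDualObjective [Nonempty β] {ξ : ℝ} (hξ : ξ ≠ 0) (κ : ℝ) (x : ι → E)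
    {B : β → Finset ι} (hB : ∀ i, ∃! k, i ∈ B k) (ℓ : ι → ℝ → ℝ) (r : E → ℝ) (v g : E)
    (a Δa : ι → ℝ) :
    ∑ k, localDualObjective ξ κ x B ℓ r v g a Δa k =
      -(1 / (Fintype.card ι : ℝ)) * ∑ i, ℓ i (-(a i + Δa i))
        - ξ * (r v + ⟪g, primalVector ξ x Δa⟫
          + κ / (2 * (ξ * Fintype.card ι) ^ 2) * ∑ k, ‖∑ i ∈ B k, Δa i • x i‖ ^ 2) := by
  have loss_term : ∑ k, -((1 / (Fintype.card ι : ℝ)) * ∑ i ∈ B k, ℓ i (-(a i + Δa i)))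
      = -(1 / (Fintype.card ι : ℝ)) * ∑ i, ℓ i (-(a i + Δa i)) := by
    rw [Finset.sum_neg_distrib, ← Finset.mul_sum, sum_sum_of_existsUnique_mem hB, neg_mul]
  have constant_term : ∑ _k : β, ξ / (Fintype.card β : ℝ) * r v = ξ * r v := by
    rw [Finset.sum_const, Finset.card_univ, nsmul_eq_mul, ← mul_assoc,
      mul_div_cancel₀ _ (Nat.cast_ne_zero.mpr Fintype.card_ne_zero)]
  have linear_term : ∑ k, ⟪(1 / (Fintype.card ι : ℝ)) • ∑ i ∈ B k, Δa i • x i, g⟫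
      = ξ * ⟪g, primalVector ξ x Δa⟫ := by
    rw [← sum_inner, ← Finset.smul_sum, sum_sum_of_existsUnique_mem hB, ← smul_primalVector hξ,
      real_inner_smul_left, real_inner_comm]
  have quadratic_term :
      ∑ k, κ / (2 * ξ * (Fintype.card ι : ℝ) ^ 2) * ‖∑ i ∈ B k, Δa i • x i‖ ^ 2
        = ξ * (κ / (2 * (ξ * Fintype.card ι) ^ 2) * ∑ k, ‖∑ i ∈ B k, Δa i • x i‖ ^ 2) := by
    rw [← Finset.mul_sum, ← mul_assoc]
    congr 1
    field_simp
  simp only [localDualObjective, Finset.sum_sub_distrib, loss_term, constant_term, linear_term,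
    quadratic_term]
  ring

theorem block_separable_dual_lower_bound_general [Nonempty ι] {ξ κ : ℝ} (hξ : 0 < ξ) {x : ι → E}
    {B : β → Finset ι} (hB : ∀ i, ∃! k, i ∈ B k) (ℓ : ι → ℝ → ℝ) {r : E → ℝ} {a : ι → ℝ} {g : E}
    (hr : BlockCompatibleAt ξ κ x B r (primalVector ξ x a) g) (Δa : ι → ℝ) :
    ∑ k, localDualObjective ξ κ x B ℓ r (primalVector ξ x a) g a Δa k
      ≤ dualObjective ξ x ℓ r (a + Δa) := by
  have : Nonempty β := ‹Nonempty ι›.map fun i => (hB i).choose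
  rw [sum_localDualObjective hξ.ne' κ x hB, dualObjective, primalVector_add]
  exact sub_le_sub_left (mul_le_mul_of_nonneg_left (hr Δa) hξ.le) _

end BlockSeparable

/-- Block-separable lower bound on the dual objective (equation (15)):
`D(abar + Δa) ≥ ∑ₖ ΔDₖ(Δa_{[k]}; v(abar), abar_{[k]})`. -/
theorem block_separable_dual_lower_bound
    (n d K : ℕ) (hn : 1 ≤ n) (hd : 1 ≤ d) (hK : 1 ≤ K)
    (x : Fin n → EuclideanSpace ℝ (Fin d))
    (ξ κ : ℝ) (hξ : 0 < ξ) (hκ : 0 < κ)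
    (B : Fin K → Finset (Fin n))
    (hpart : ∀ i : Fin n, ∃! k : Fin K, i ∈ B k)
    (ℓstar : Fin n → ℝ → ℝ)
    (rstar : EuclideanSpace ℝ (Fin d) → ℝ)
    (hdiff : Differentiable ℝ rstar)
    (hcompat : ∀ (v : EuclideanSpace ℝ (Fin d)) (Δa : Fin n → ℝ),
      rstar (v + (1 / (ξ * n)) • ∑ i : Fin n, Δa i • x i)
        ≤ rstar v
          + ⟪gradient rstar v, ((1 / (ξ * n)) • ∑ i : Fin n, Δa i • x i :
              EuclideanSpace ℝ (Fin d))⟫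
          + κ / (2 * (ξ * n) ^ 2) *
              ∑ k : Fin K, ‖∑ i ∈ B k, Δa i • x i‖ ^ 2) :
    ∀ abar Δa : Fin n → ℝ,
      -(1 / (n : ℝ)) * ∑ i : Fin n, ℓstar i (-(abar i + Δa i))
          - ξ * rstar ((1 / (ξ * n)) • ∑ i : Fin n, (abar i + Δa i) • x i)
        ≥ ∑ k : Fin K,
            (-((1 / (n : ℝ)) * ∑ i ∈ B k, ℓstar i (-(abar i + Δa i)))
              - (ξ / (K : ℝ)) * rstar ((1 / (ξ * n)) • ∑ i : Fin n, abar i • x i)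
              - ⟪((1 / (n : ℝ)) • ∑ i ∈ B k, Δa i • x i : EuclideanSpace ℝ (Fin d)),
                  gradient rstar ((1 / (ξ * n)) • ∑ i : Fin n, abar i • x i)⟫
              - κ / (2 * ξ * (n : ℝ) ^ 2) * ‖∑ i ∈ B k, Δa i • x i‖ ^ 2) := by
  intro abar Δa
  have : Nonempty (Fin n) := ⟨⟨0, hn⟩⟩
  have hr : BlockCompatibleAt ξ κ x B rstar (primalVector ξ x abar)
      (gradient rstar (primalVector ξ x abar)) := by
    simpa only [BlockCompatibleAt, primalVector, Fintype.card_fin] using hcompat _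
  simpa only [dualObjective, localDualObjective, primalVector, Fintype.card_fin, Pi.add_apply]
    using block_separable_dual_lower_bound_general hξ hpart ℓstar hr Δa
end

section
/- Lemma 2 (expected ascent under random scheduling): in the setting of the block-separable dual, let (Ω, ℱ, ℙ) be a probability space, U ∈ [0,1], and let I_1, …, I_K : Ω → {0,1} be measurable indicator variables with E[I_k] = U for every k, and η : Ω → [0,1] measurable with E[η] = U. Suppose each ℓ_i^* : ℝ → ℝ is convex, and r^* : ℝ^d → ℝ is differentiable and κ-compatible. Fix a ∈ ℝ^n, v ∈ ℝ^d, and a direction Δa ∈ ℝ^n with blocks Δa_{[k]}. Define the random post-update objective D̃ = −ξ·r^*(v + (1/(ξn))·Σ_{k=1}^K I_k·Σ_{i∈D_k} Δa_i x_i) − Σ_{k=1}^K R_k(a_{[k]} + η·Δa_{[k]}). Then E[D̃] ≥ Σ_{k=1}^K [ U·ΔD_k(Δa_{[k]}; v, a_{[k]}) + (1−U)·(−(ξ/K)·r^*(v) − R_k(a_{[k]})) ]. -/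
open MeasureTheory
open scoped RealInnerProductSpace BigOperators

/-!
Since the blocks partition the index set, scaling each block of the direction by its own weight
gives a direction to which the compatibility inequality still applies. A weight `t ∈ [0, 1]`
satisfies `t ^ 2 ≤ t`, so the resulting quadratic upper bound on `r^*` is at most affine in the
weights; convexity similarly bounds the losses by an affine function of the learning rate. The
expectation of an affine function depends only on means, so no independence of the weights and the
learning rate is involved.
-/

theorem sum_eq_sum_sum_of_existsUnique_mem {ι J M : Type*} [Fintype ι] [Fintype J]
    [AddCommMonoid M] {B : J → Finset ι} (hB : ∀ i, ∃! k, i ∈ B k) (f : ι → M) :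
    ∑ i, f i = ∑ k, ∑ i ∈ B k, f i := by
  classical
  choose b hb hb_unique using hB
  have hfiber (k : J) : ({i | b i = k} : Finset ι) = B k := by
    ext i
    simpa using ⟨fun h => h ▸ hb i, fun h => (hb_unique i k h).symm⟩
  simp only [← Finset.sum_fiberwise Finset.univ b f, hfiber]

theorem convexOn_finset_sum {ι V : Type*} [AddCommGroup V] [Module ℝ V] {C : Set V}
    {f : ι → V → ℝ} (s : Finset ι) (hC : Convex ℝ C) (hf : ∀ i ∈ s, ConvexOn ℝ C (f i)) :
    ConvexOn ℝ C (fun x => ∑ i ∈ s, f i x) := by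
  simpa only [Finset.sum_fn] using
    Finset.sum_induction f (ConvexOn ℝ C) (fun _ _ => ConvexOn.add) (convexOn_const 0 hC) hf

theorem le_add_mul_sub_of_convexOn_Icc {f : ℝ → ℝ} (hf : ConvexOn ℝ (Set.Icc 0 1) f) {t : ℝ}
    (ht : t ∈ Set.Icc (0 : ℝ) 1) : f t ≤ f 0 + t * (f 1 - f 0) := by
  have h := hf.2 (Set.right_mem_Icc.2 zero_le_one) (Set.left_mem_Icc.2 zero_le_one)
    ht.1 (sub_nonneg.2 ht.2) (by ring)
  simp only [smul_eq_mul, mul_one, mul_zero, add_zero] at h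
  linarith

section Integral

variable {Ω : Type*} [MeasurableSpace Ω] {μ : Measure Ω}

theorem integrable_comp_of_ae_mem_isCompact {V : Type*} [TopologicalSpace V] [IsFiniteMeasure μ]
    {F : V → ℝ} {X : Ω → V} {S : Set V} (hF : Continuous F) (hX : AEStronglyMeasurable X μ)
    (hS : IsCompact S) (hXS : ∀ᵐ ω ∂μ, X ω ∈ S) : Integrable (fun ω => F (X ω)) μ := by
  obtain ⟨C, hC⟩ := hS.exists_bound_of_continuousOn hF.continuousOn
  exact .of_bound (hF.comp_aestronglyMeasurable hX) C (hXS.mono fun ω hω => hC _ hω)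

/-- The Edmundson–Madansky inequality. -/
theorem integral_comp_le_of_convexOn_univ [IsProbabilityMeasure μ] {f : ℝ → ℝ}
    (hf : ConvexOn ℝ Set.univ f) {X : Ω → ℝ} (hX : AEMeasurable X μ)
    (hX01 : ∀ᵐ ω ∂μ, X ω ∈ Set.Icc (0 : ℝ) 1) :
    ∫ ω, f (X ω) ∂μ ≤ f 0 + (∫ ω, X ω ∂μ) * (f 1 - f 0) := by
  have hf_cont : Continuous f := continuousOn_univ.1 (hf.continuousOn isOpen_univ)
  have hf_Icc : ConvexOn ℝ (Set.Icc 0 1) f := hf.subset (Set.subset_univ _) (convex_Icc 0 1)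
  have hX_int : Integrable X μ := .of_mem_Icc 0 1 hX hX01
  calc ∫ ω, f (X ω) ∂μ
      ≤ ∫ ω, (f 0 + X ω * (f 1 - f 0)) ∂μ :=
        integral_mono_ae
          (integrable_comp_of_ae_mem_isCompact hf_cont hX.aestronglyMeasurable isCompact_Icc hX01)
          ((integrable_const _).add (hX_int.mul_const _))
          (hX01.mono fun ω hω => le_add_mul_sub_of_convexOn_Icc hf_Icc hω)
    _ = f 0 + (∫ ω, X ω ∂μ) * (f 1 - f 0) := by
        rw [integral_add (integrable_const _) (hX_int.mul_const _), integral_mul_const]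
        simp

end Integral

/-- The data of a block-separable dual problem: data points `x`, blocks `B`, parameters `ξ` and `κ`,
normalisation `N` (the number `n` of data points in the paper), conjugate losses `ℓ` and conjugate
regulariser `r`. The laws relating these data are hypotheses of the results, not fields. -/
structure BlockSeparableDual (ι J E : Type*) where
  x : ι → E
  B : J → Finset ι
  ξ : ℝ
  κ : ℝ
  N : ℝ
  ℓ : ι → ℝ → ℝ
  r : E → ℝ

namespace BlockSeparableDual

section Loss

variable {ι J E : Type*} (D : BlockSeparableDual ι J E)

/-- The contribution `R_k` of block `k` to the conjugate loss, evaluated at the full vector `a`: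
only its coordinates in the block matter. -/
noncomputable def blockLoss (k : J) (a : ι → ℝ) : ℝ :=
  (1 / D.N) * ∑ i ∈ D.B k, D.ℓ i (-(a i))

variable {D}

theorem convexOn_blockLoss (hN : 0 ≤ D.N) (hℓ : ∀ i, ConvexOn ℝ Set.univ (D.ℓ i)) (k : J) :
    ConvexOn ℝ Set.univ (D.blockLoss k) :=
  (convexOn_finset_sum (D.B k) convex_univ fun i _ =>
    (hℓ i).comp_linearMap (-LinearMap.proj i : (ι → ℝ) →ₗ[ℝ] ℝ)).smul (one_div_nonneg.2 hN)

variable [Fintype J]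

theorem convexOn_sum_blockLoss_add_smul (hN : 0 ≤ D.N) (hℓ : ∀ i, ConvexOn ℝ Set.univ (D.ℓ i))
    (a Δa : ι → ℝ) : ConvexOn ℝ Set.univ (fun t : ℝ => ∑ k, D.blockLoss k (a + t • Δa)) :=
  convexOn_finset_sum Finset.univ convex_univ fun k _ => by
    simpa [Function.comp_def, AffineMap.lineMap_apply_module', add_comm] using
      (convexOn_blockLoss hN hℓ k).comp_affineMap (AffineMap.lineMap a (a + Δa))

end Loss

variable {ι J E : Type*} [NormedAddCommGroup E] [InnerProductSpace ℝ E]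
  (D : BlockSeparableDual ι J E)

/-- The combination `∑ i ∈ D_k, α_i x_i` of the data points in block `k`. -/
def blockImage (k : J) (α : ι → ℝ) : E := ∑ i ∈ D.B k, α i • D.x i

/-- The primal point `v + (1 / (ξ n)) ∑ k, t_k ∑ i ∈ D_k, α_i x_i` reached from `v` when the
update of block `k` is applied with weight `t k`. -/
noncomputable def weightedStep [Fintype J] (v : E) (α : ι → ℝ) (t : J → ℝ) : E :=
  v + (1 / (D.ξ * D.N)) • ∑ k, t k • D.blockImage k α

/-- The post-update dual objective `D̃` when block `k` moves the primal point with weight `t k`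
and the dual variable moves with learning rate `τ`. -/
noncomputable def updatedObjective [Fintype J] (v : E) (a Δa : ι → ℝ) (t : J → ℝ) (τ : ℝ) : ℝ :=
  -D.ξ * D.r (D.weightedStep v Δa t) - ∑ k, D.blockLoss k (a + τ • Δa)

section Gradient

variable [CompleteSpace E]

/-- The inequality defining `κ`-compatibility of `r^*`, at the single point `v`. -/
def IsCompatibleAt [Fintype ι] [Fintype J] (v : E) : Prop :=
  ∀ α : ι → ℝ,
    D.r (v + (1 / (D.ξ * D.N)) • ∑ i, α i • D.x i)
      ≤ D.r v + ⟪gradient D.r v, (1 / (D.ξ * D.N)) • ∑ i, α i • D.x i⟫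
        + D.κ / (2 * (D.ξ * D.N) ^ 2) * ∑ k, ‖D.blockImage k α‖ ^ 2

/-- The block-`k` part of the quadratic model bounding the increase of `ξ r^*` from above; these
are the last two terms of the local objective, with the opposite sign. -/
noncomputable def blockModel (k : J) (v : E) (α : ι → ℝ) : ℝ :=
  ⟪(1 / D.N) • D.blockImage k α, gradient D.r v⟫
    + D.κ / (2 * D.ξ * D.N ^ 2) * ‖D.blockImage k α‖ ^ 2

/-- The local objective `ΔD_k`. -/
noncomputable def localObjective [Fintype J] (k : J) (v : E) (a Δa : ι → ℝ) : ℝ :=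
  -D.blockLoss k (a + Δa) - (D.ξ / Fintype.card J) * D.r v
    - ⟪(1 / D.N) • D.blockImage k Δa, gradient D.r v⟫
    - D.κ / (2 * D.ξ * D.N ^ 2) * ‖D.blockImage k Δa‖ ^ 2

end Gradient

variable {D}

theorem exists_blockImage_eq_smul (hB : ∀ i, ∃! k, i ∈ D.B k) (α : ι → ℝ) (t : J → ℝ) :
    ∃ β : ι → ℝ, ∀ k, D.blockImage k β = t k • D.blockImage k α := by
  choose b _ hb_unique using hB
  refine ⟨fun i => t (b i) * α i, fun k => ?_⟩
  simp only [blockImage, Finset.smul_sum, mul_smul]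
  exact Finset.sum_congr rfl fun i hi => by rw [← hb_unique i k hi]

variable [Fintype J]

theorem IsCompatibleAt.mul_r_weightedStep_le [CompleteSpace E] [Fintype ι] {v : E}
    (hcompat : D.IsCompatibleAt v) (hB : ∀ i, ∃! k, i ∈ D.B k) (hξ : 0 < D.ξ) (hκ : 0 ≤ D.κ)
    (α : ι → ℝ) {t : J → ℝ} (ht : t ∈ Set.Icc (0 : J → ℝ) 1) :
    D.ξ * D.r (D.weightedStep v α t) ≤ D.ξ * D.r v + ∑ k, t k * D.blockModel k v α := by
  obtain ⟨β, hβ⟩ := exists_blockImage_eq_smul hB α t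
  have hβ_sum : ∑ i, β i • D.x i = ∑ k, t k • D.blockImage k α :=
    (sum_eq_sum_sum_of_existsUnique_mem hB _).trans (Finset.sum_congr rfl fun k _ => hβ k)
  have hsq (k : J) : ‖t k • D.blockImage k α‖ ^ 2 ≤ t k * ‖D.blockImage k α‖ ^ 2 := by
    rw [norm_smul, mul_pow, Real.norm_eq_abs, sq_abs]
    gcongr
    exact pow_le_of_le_one (ht.1 k) (ht.2 k) two_ne_zero
  have hstep := hcompat β
  simp only [hβ_sum, hβ] at hstep
  calc D.ξ * D.r (D.weightedStep v α t)
      ≤ D.ξ * (D.r v + ⟪gradient D.r v, (1 / (D.ξ * D.N)) • ∑ k, t k • D.blockImage k α⟫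
          + D.κ / (2 * (D.ξ * D.N) ^ 2) * ∑ k, t k * ‖D.blockImage k α‖ ^ 2) := by
        refine mul_le_mul_of_nonneg_left (hstep.trans ?_) hξ.le
        gcongr with k
        exact hsq k
    _ = D.ξ * D.r v + ∑ k, t k * D.blockModel k v α := by
        simp only [blockModel, inner_smul_right, inner_sum, mul_add,
          Finset.mul_sum, Finset.sum_add_distrib, add_assoc, real_inner_comm (gradient D.r v)]
        congr 2 <;> refine Finset.sum_congr rfl fun k _ => ?_ <;> field_simp

variable {Ω : Type*} [MeasurableSpace Ω] {μ : Measure Ω}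

theorem integrable_r_weightedStep [IsFiniteMeasure μ] (hr : Continuous D.r) {I : J → Ω → ℝ}
    (hI : ∀ k, AEMeasurable (I k) μ) (hI01 : ∀ k, ∀ᵐ ω ∂μ, I k ω ∈ Set.Icc (0 : ℝ) 1)
    (v : E) (α : ι → ℝ) : Integrable (fun ω => D.r (D.weightedStep v α (I · ω))) μ := by
  have hcont : Continuous fun t : J → ℝ => D.r (D.weightedStep v α t) := by
    unfold weightedStep
    fun_prop
  refine integrable_comp_of_ae_mem_isCompact (X := fun ω k => I k ω) (S := Set.Icc 0 1) hcont
    (aemeasurable_pi_lambda _ hI).aestronglyMeasurable isCompact_Icc ?_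
  filter_upwards [ae_all_iff.2 hI01] with ω hω
  exact ⟨fun k => (hω k).1, fun k => (hω k).2⟩

theorem IsCompatibleAt.mul_integral_r_weightedStep_le [CompleteSpace E] [Fintype ι]
    [IsProbabilityMeasure μ] {v : E} (hcompat : D.IsCompatibleAt v)
    (hB : ∀ i, ∃! k, i ∈ D.B k) (hξ : 0 < D.ξ) (hκ : 0 ≤ D.κ) (hr : Continuous D.r)
    {I : J → Ω → ℝ} (hI : ∀ k, AEMeasurable (I k) μ)
    (hI01 : ∀ k, ∀ᵐ ω ∂μ, I k ω ∈ Set.Icc (0 : ℝ) 1) (α : ι → ℝ) :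
    D.ξ * ∫ ω, D.r (D.weightedStep v α (I · ω)) ∂μ
      ≤ D.ξ * D.r v + ∑ k, (∫ ω, I k ω ∂μ) * D.blockModel k v α := by
  have hI_int (k : J) : Integrable (fun ω => I k ω * D.blockModel k v α) μ :=
    (Integrable.of_mem_Icc 0 1 (hI k) (hI01 k)).mul_const _
  have hsum_int : Integrable (fun ω => ∑ k, I k ω * D.blockModel k v α) μ :=
    integrable_finsetSum _ fun k _ => hI_int k
  calc D.ξ * ∫ ω, D.r (D.weightedStep v α (I · ω)) ∂μ
      = ∫ ω, D.ξ * D.r (D.weightedStep v α (I · ω)) ∂μ := (integral_const_mul _ _).symm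
    _ ≤ ∫ ω, (D.ξ * D.r v + ∑ k, I k ω * D.blockModel k v α) ∂μ := by
        refine integral_mono_ae ((integrable_r_weightedStep hr hI hI01 v α).const_mul _)
          ((integrable_const _).add hsum_int) ?_
        filter_upwards [ae_all_iff.2 hI01] with ω hω
        exact hcompat.mul_r_weightedStep_le hB hξ hκ α
          ⟨fun k => (hω k).1, fun k => (hω k).2⟩
    _ = D.ξ * D.r v + ∑ k, (∫ ω, I k ω ∂μ) * D.blockModel k v α := by
        rw [integral_add (integrable_const _) hsum_int, integral_finsetSum _ fun k _ => hI_int k]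
        simp [integral_mul_const]

theorem localObjective_combination_eq [CompleteSpace E] [Nonempty J] (v : E) (a Δa : ι → ℝ)
    (U : ℝ) :
    ∑ k, (U * D.localObjective k v a Δa
        + (1 - U) * (-(D.ξ / Fintype.card J) * D.r v - D.blockLoss k a))
      = -(D.ξ * D.r v + ∑ k, U * D.blockModel k v Δa)
        - (∑ k, D.blockLoss k a
          + U * (∑ k, D.blockLoss k (a + Δa) - ∑ k, D.blockLoss k a)) := by
  have hξ_sum : D.ξ * D.r v = ∑ _k : J, (D.ξ / Fintype.card J) * D.r v := by
    simp [← mul_assoc, mul_div_cancel₀]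
  rw [hξ_sum, ← Finset.sum_sub_distrib, Finset.mul_sum, ← Finset.sum_add_distrib,
    ← Finset.sum_add_distrib, ← Finset.sum_neg_distrib, ← Finset.sum_sub_distrib]
  refine Finset.sum_congr rfl fun k _ => ?_
  simp only [localObjective, blockModel]
  ring

end BlockSeparableDual

theorem expected_ascent_random_scheduling_general {ι J E Ω : Type*} [Fintype ι] [Fintype J]
    [Nonempty J] [NormedAddCommGroup E] [InnerProductSpace ℝ E] [CompleteSpace E]
    (D : BlockSeparableDual ι J E) (hξ : 0 < D.ξ) (hκ : 0 ≤ D.κ) (hN : 0 < D.N)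
    (hB : ∀ i, ∃! k, i ∈ D.B k) (hℓ : ∀ i, ConvexOn ℝ Set.univ (D.ℓ i))
    (hr : Differentiable ℝ D.r) {v : E} (hcompat : D.IsCompatibleAt v)
    [MeasurableSpace Ω] {μ : Measure Ω} [IsProbabilityMeasure μ] {U : ℝ}
    {I : J → Ω → ℝ} (hI : ∀ k, AEMeasurable (I k) μ)
    (hI01 : ∀ k, ∀ᵐ ω ∂μ, I k ω ∈ Set.Icc (0 : ℝ) 1) (hIU : ∀ k, ∫ ω, I k ω ∂μ = U)
    {η : Ω → ℝ} (hη : AEMeasurable η μ) (hη01 : ∀ᵐ ω ∂μ, η ω ∈ Set.Icc (0 : ℝ) 1)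
    (hηU : ∫ ω, η ω ∂μ = U) (a Δa : ι → ℝ) :
    ∑ k, (U * D.localObjective k v a Δa
        + (1 - U) * (-(D.ξ / Fintype.card J) * D.r v - D.blockLoss k a))
      ≤ ∫ ω, D.updatedObjective v a Δa (I · ω) (η ω) ∂μ := by
  have hloss_convex := BlockSeparableDual.convexOn_sum_blockLoss_add_smul hN.le hℓ a Δa
  have hloss := integral_comp_le_of_convexOn_univ hloss_convex hη hη01
  have hconj := hcompat.mul_integral_r_weightedStep_le hB hξ hκ hr.continuous hI hI01 Δa
  have hloss_int := integrable_comp_of_ae_mem_isCompact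
    (continuousOn_univ.1 (hloss_convex.continuousOn isOpen_univ)) hη.aestronglyMeasurable
    isCompact_Icc hη01
  have hconj_int := BlockSeparableDual.integrable_r_weightedStep hr.continuous hI hI01 v Δa
  simp only [zero_smul, add_zero, one_smul, hηU] at hloss
  simp only [hIU] at hconj
  simp only [BlockSeparableDual.updatedObjective]
  rw [BlockSeparableDual.localObjective_combination_eq,
    integral_sub (hconj_int.const_mul _) hloss_int, integral_const_mul]
  linarith

/-- Lemma 2 (expected ascent under random scheduling): the expected post-update dual
objective is lower bounded by a `U`-weighted combination of the local objectives
`ΔDₖ` and the current objective contributions. -/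
theorem expected_ascent_random_scheduling
    (n d K : ℕ) (hn : 1 ≤ n) (hd : 1 ≤ d) (hK : 1 ≤ K)
    (x : Fin n → EuclideanSpace ℝ (Fin d))
    (ξ κ : ℝ) (hξ : 0 < ξ) (hκ : 0 < κ)
    (B : Fin K → Finset (Fin n))
    (hpart : ∀ i : Fin n, ∃! k : Fin K, i ∈ B k)
    (ℓstar : Fin n → ℝ → ℝ)
    (hℓconv : ∀ i : Fin n, ConvexOn ℝ Set.univ (ℓstar i))
    (rstar : EuclideanSpace ℝ (Fin d) → ℝ)
    (hdiff : Differentiable ℝ rstar)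
    (hcompat : ∀ (v : EuclideanSpace ℝ (Fin d)) (Δa : Fin n → ℝ),
      rstar (v + (1 / (ξ * n)) • ∑ i : Fin n, Δa i • x i)
        ≤ rstar v
          + ⟪gradient rstar v, ((1 / (ξ * n)) • ∑ i : Fin n, Δa i • x i :
              EuclideanSpace ℝ (Fin d))⟫
          + κ / (2 * (ξ * n) ^ 2) *
              ∑ k : Fin K, ‖∑ i ∈ B k, Δa i • x i‖ ^ 2)
    (Ω : Type*) [MeasureSpace Ω] [IsProbabilityMeasure (volume : Measure Ω)]
    (U : ℝ) (hU : U ∈ Set.Icc (0 : ℝ) 1)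
    (I : Fin K → Ω → ℝ)
    (hImeas : ∀ k, Measurable (I k))
    (hI01 : ∀ k ω, I k ω = 0 ∨ I k ω = 1)
    (hIU : ∀ k, ∫ ω, I k ω = U)
    (η : Ω → ℝ) (hηmeas : Measurable η)
    (hη01 : ∀ ω, η ω ∈ Set.Icc (0 : ℝ) 1)
    (hηU : ∫ ω, η ω = U)
    (a Δa : Fin n → ℝ) (v : EuclideanSpace ℝ (Fin d)) :
    ∫ ω,
        (-ξ * rstar (v + (1 / (ξ * n)) •
              ∑ k : Fin K, I k ω • ∑ i ∈ B k, Δa i • x i)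
          - ∑ k : Fin K, (1 / (n : ℝ)) *
              ∑ i ∈ B k, ℓstar i (-(a i + η ω * Δa i)))
      ≥ ∑ k : Fin K,
          (U *
              (-((1 / (n : ℝ)) * ∑ i ∈ B k, ℓstar i (-(a i + Δa i)))
                - (ξ / (K : ℝ)) * rstar v
                - ⟪((1 / (n : ℝ)) • ∑ i ∈ B k, Δa i • x i :
                    EuclideanSpace ℝ (Fin d)), gradient rstar v⟫
                - κ / (2 * ξ * (n : ℝ) ^ 2) * ‖∑ i ∈ B k, Δa i • x i‖ ^ 2)
            + (1 - U) *
              (-(ξ / (K : ℝ)) * rstar v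
                - (1 / (n : ℝ)) * ∑ i ∈ B k, ℓstar i (-(a i)))) := by
  have : Nonempty (Fin K) := ⟨⟨0, hK⟩⟩
  have hI01' (k : Fin K) (ω : Ω) : I k ω ∈ Set.Icc (0 : ℝ) 1 := by
    rcases hI01 k ω with h | h <;> simp [h]
  have h := expected_ascent_random_scheduling_general ⟨x, B, ξ, κ, n, ℓstar, rstar⟩ hξ hκ.le
    (Nat.cast_pos.2 hn) hpart hℓconv hdiff (hcompat v) (fun k => (hImeas k).aemeasurable)
    (fun k => ae_of_all _ (hI01' k)) hIU hηmeas.aemeasurable (ae_of_all _ hη01) hηU a Δa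
  simp only [BlockSeparableDual.localObjective, Fintype.card_fin] at h
  exact h
end
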